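/- Periodic minimum problem, large domains: let τ ∈ [0,1], σ ∈ (0,1) and L ≥ max{τ, 1−τ}. Then min{2, 4√(σL), 4√((1−σ)L)} is the least element of the set of values E^{#}_τ(v) as v ranges over Adm(L,σ): every v ∈ Adm(L,σ) satisfies E^{#}_τ(v) ≥ min{2, 4√(σL), 4√((1−σ)L)}, and some v ∈ Adm(L,σ) attains this value. In particular, for L ≥ 1 this minimum value is independent of τ. -/

import Mathlib

open MeasureTheory Filter Set

noncomputable section

/-- `Adm L σ v` : `v` is admissible, i.e. `0 ≤ v ≤ 1` on `(0,L)`, `v` has finite pointwise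
total variation on `(0,L)` and `∫_{(0,L)} v = σL`. -/
def Adm (L σ : ℝ) (v : ℝ → ℝ) : Prop :=
  (∀ x ∈ Set.Ioo 0 L, 0 ≤ v x ∧ v x ≤ 1) ∧
  BoundedVariationOn v (Set.Ioo 0 L) ∧
  (∫ x in Set.Ioo 0 L, v x) = σ * L

/-- The interior part of the limit functional:
`2·λ({x ∈ (0,L) : 0 < v(x) < 1}) + Var(v;(0,L))`. -/
def Fvol (L : ℝ) (v : ℝ → ℝ) : ℝ :=
  2 * (volume {x ∈ Set.Ioo 0 L | 0 < v x ∧ v x < 1}).toReal +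
    (eVariationOn v (Set.Ioo 0 L)).toReal

/-- The boundary term `φ_τ(x,y) = λ( [0,1] ∩ ( ([−τ,x−τ] ∪ [1−τ,x+1−τ]) Δ [0,y] ) )`. -/
def phi (τ x y : ℝ) : ℝ :=
  (volume (Set.Icc (0 : ℝ) 1 ∩
    symmDiff (Set.Icc (-τ) (x - τ) ∪ Set.Icc (1 - τ) (x + 1 - τ)) (Set.Icc 0 y))).toReal

/-!
Write `V` for the variation of `v`, `a`, `b` for its traces and `2ω = V + φ_τ(a,b)`. Since
`φ_τ(a,b) ≥ |a - b|`, `2ω` is at least the length of the closed path obtained by joining the ends of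
`v`, so `v` oscillates by at most `ω`. If `ω ≥ 1` the energy is at least `2`. Otherwise, if `v`
vanishes somewhere, then `v ≤ ω < 1`, so all of the mass `σL` lies in the diffuse set
`D = {0 < v < 1}`; thus `σL ≤ ω λ(D)`, and AM-GM gives an energy of at least `4√(σL)`. If `v` takes
the value `1`, the same applies to `1 - v`. If `v` takes neither value, then `D = (0,L)` costs `2L`;
moreover `V ≥ |a - σ| + |σ - b|`, and `φ_τ(a,b) ≥ 1 - |a - τ| - |b - (1 - τ)|` because two arcs of
lengths `τ` and `1 - τ` tile the circle, so that `V + φ_τ(a,b) ≥ 1 - |σ - τ| - |σ - (1 - τ)|`. With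
`L ≥ max{τ, 1 - τ}` this suffices.

Equality is attained by a plateau of height `1`, by a square plateau `√(σL) × √(σL)`, or by the
reflection `v ↦ 1 - v` of the latter.
-/

open scoped symmDiff Topology

section Variation

variable {α E : Type*} [LinearOrder α]

theorem edist_add_edist_add_edist_le_eVariationOn [PseudoEMetricSpace E] (f : α → E) {s : Set α}
    {p x y q : α} (hp : p ∈ s) (hx : x ∈ s) (hy : y ∈ s) (hq : q ∈ s)
    (hpx : p ≤ x) (hxy : x ≤ y) (hyq : y ≤ q) :
    edist (f p) (f x) + edist (f x) (f y) + edist (f y) (f q) ≤ eVariationOn f s :=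
  calc
    _ = eVariationOn f {p, x} + eVariationOn f {x, y} + eVariationOn f {y, q} := by
      simp only [eVariationOn.pair]
    _ ≤ eVariationOn f ({p, x} ∪ {x, y}) + eVariationOn f {y, q} := by
      gcongr
      exact eVariationOn.add_le_union f (by grind)
    _ ≤ eVariationOn f ({p, x} ∪ {x, y} ∪ {y, q}) := eVariationOn.add_le_union f (by grind)
    _ ≤ eVariationOn f s := eVariationOn.mono f (by grind)

theorem edist_add_edist_add_edist_le_eVariationOn_of_tendsto [PseudoEMetricSpace E] {f : α → E}
    {s : Set α} {l l' : Filter α} [l.NeBot] [l'.NeBot] {a b : E}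
    (ha : Tendsto f l (𝓝 a)) (hb : Tendsto f l' (𝓝 b)) {x y : α}
    (hx : x ∈ s) (hy : y ∈ s) (hxy : x ≤ y)
    (hl : ∀ᶠ p in l, p ∈ s ∧ p ≤ x) (hl' : ∀ᶠ q in l', q ∈ s ∧ y ≤ q) :
    edist a (f x) + edist (f x) (f y) + edist (f y) b ≤ eVariationOn f s := by
  have hlim : Tendsto
      (fun z : α × α ↦ edist (f z.1) (f x) + edist (f x) (f y) + edist (f y) (f z.2))
      (l ×ˢ l') (𝓝 (edist a (f x) + edist (f x) (f y) + edist (f y) b)) :=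
    (((ha.comp tendsto_fst).edist tendsto_const_nhds).add tendsto_const_nhds).add
      (tendsto_const_nhds.edist (hb.comp tendsto_snd))
  refine le_of_tendsto hlim ((hl.prod_mk hl').mono ?_)
  rintro ⟨p, q⟩ ⟨⟨hp, hpx⟩, hq, hyq⟩
  exact edist_add_edist_add_edist_le_eVariationOn f hp hx hy hq hpx hxy hyq

section Traces

variable [TopologicalSpace α] [OrderTopology α] [DenselyOrdered α] {f : α → E} {l r x y : α}
  {a b c : E}

theorem dist_add_dist_add_dist_le_variation_Ioo [PseudoMetricSpace E]
    (hf : BoundedVariationOn f (Ioo l r))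
    (ha : Tendsto f (𝓝[Ioo l r] l) (𝓝 a)) (hb : Tendsto f (𝓝[Ioo l r] r) (𝓝 b))
    (hx : x ∈ Ioo l r) (hy : y ∈ Ioo l r) (hxy : x ≤ y) :
    dist a (f x) + dist (f x) (f y) + dist (f y) b ≤ (eVariationOn f (Ioo l r)).toReal := by
  have hlr : l < r := hx.1.trans hx.2
  have := left_nhdsWithin_Ioo_neBot hlr
  have := right_nhdsWithin_Ioo_neBot hlr
  have hl : ∀ᶠ p in 𝓝[Ioo l r] l, p ∈ Ioo l r ∧ p ≤ x :=
    eventually_mem_nhdsWithin.and (mem_nhdsWithin_of_mem_nhds (Iic_mem_nhds hx.1))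
  have hr : ∀ᶠ q in 𝓝[Ioo l r] r, q ∈ Ioo l r ∧ y ≤ q :=
    eventually_mem_nhdsWithin.and (mem_nhdsWithin_of_mem_nhds (Ici_mem_nhds hy.2))
  have h := ENNReal.toReal_mono hf
    (edist_add_edist_add_edist_le_eVariationOn_of_tendsto ha hb hx hy hxy hl hr)
  rwa [ENNReal.toReal_add (by finiteness) (by finiteness),
    ENNReal.toReal_add (by finiteness) (by finiteness), ← dist_edist, ← dist_edist,
    ← dist_edist] at h

theorem two_mul_dist_le_variation_Ioo_add_dist [PseudoMetricSpace E]
    (hf : BoundedVariationOn f (Ioo l r))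
    (ha : Tendsto f (𝓝[Ioo l r] l) (𝓝 a)) (hb : Tendsto f (𝓝[Ioo l r] r) (𝓝 b))
    (hx : x ∈ Ioo l r) (hy : y ∈ Ioo l r) :
    2 * dist (f x) (f y) ≤ (eVariationOn f (Ioo l r)).toReal + dist a b := by
  wlog hxy : x ≤ y generalizing x y
  · rw [dist_comm]
    exact this hy hx (le_of_not_ge hxy)
  have hpath := dist_add_dist_add_dist_le_variation_Ioo hf ha hb hx hy hxy
  have hclose := dist_triangle4 (f x) a b (f y)
  rw [dist_comm (f x) a, dist_comm b] at hclose
  linarith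

theorem dist_add_dist_le_variation_Ioo_of_mem_segment [SeminormedAddCommGroup E] [NormedSpace ℝ E]
    (hf : BoundedVariationOn f (Ioo l r))
    (ha : Tendsto f (𝓝[Ioo l r] l) (𝓝 a)) (hb : Tendsto f (𝓝[Ioo l r] r) (𝓝 b))
    (hx : x ∈ Ioo l r) (hy : y ∈ Ioo l r) (hc : c ∈ segment ℝ (f x) (f y)) :
    dist a c + dist c b ≤ (eVariationOn f (Ioo l r)).toReal := by
  wlog hxy : x ≤ y generalizing x y
  · exact this hy hx (segment_symm ℝ (f x) (f y) ▸ hc) (le_of_not_ge hxy)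
  calc
    dist a c + dist c b ≤ dist a (f x) + dist (f x) c + (dist c (f y) + dist (f y) b) :=
      add_le_add (dist_triangle _ _ _) (dist_triangle _ _ _)
    _ = dist a (f x) + dist (f x) (f y) + dist (f y) b := by
      rw [← dist_add_dist_of_mem_segment hc]
      ring
    _ ≤ _ := dist_add_dist_add_dist_le_variation_Ioo hf ha hb hx hy hxy

theorem eVariationOn_indicator_Icc_const [NoMinOrder α] [NoMaxOrder α] [SeminormedAddCommGroup E]
    (hlr : l ≤ r) (c : E) :
    eVariationOn ((Icc l r).indicator fun _ ↦ c) univ = 2 * ‖c‖ₑ := by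
  set f : α → E := (Icc l r).indicator fun _ ↦ c
  have hin : ∀ x ∈ Icc l r, f x = c := fun x hx ↦ indicator_of_mem hx _
  have hleft : ∀ x ∈ Iio l, f x = 0 := fun x hx ↦ indicator_of_notMem (fun h ↦ h.1.not_gt hx) _
  have hright : ∀ x ∈ Ioi r, f x = 0 := fun x hx ↦ indicator_of_notMem (fun h ↦ h.2.not_gt hx) _
  have hconst {s : Set α} {d : E} (h : ∀ x ∈ s, f x = d) : eVariationOn f s = 0 :=
    eVariationOn.constant_on (by rintro _ ⟨x, hx, rfl⟩ _ ⟨y, hy, rfl⟩; rw [h x hx, h y hy])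
  have hjumpl : eVariationOn f (Iic l) = ‖c‖ₑ := by
    have h := eVariationOn.eVariationOn_on_inter_Iic_eq_Iio_add_edist (f := f) (s := univ) (a := l)
      (l := 0) (by rw [univ_inter]; infer_instance) (mem_univ l)
      (tendsto_const_nhds.congr' (eventually_mem_nhdsWithin.mono fun x hx ↦ (hleft x hx.2).symm))
    rw [univ_inter, univ_inter] at h
    rw [h, hconst hleft, hin l (left_mem_Icc.2 hlr), zero_add, edist_zero_right]
  have hjumpr : eVariationOn f (Ici r) = ‖c‖ₑ := by
    have h := eVariationOn.eVariationOn_on_inter_Ici_eq_Ioi_add_edist (f := f) (s := univ) (a := r)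
      (l := 0) (by rw [univ_inter]; infer_instance) (mem_univ r)
      (tendsto_const_nhds.congr' (eventually_mem_nhdsWithin.mono fun x hx ↦ (hright x hx.2).symm))
    rw [univ_inter, univ_inter] at h
    rw [h, hconst hright, hin r (right_mem_Icc.2 hlr), zero_add, edist_zero_right]
  have hsplit : (univ : Set α) = Iic l ∪ Icc l r ∪ Ici r := by
    rw [Iic_union_Icc_eq_Iic hlr, Iic_union_Ici]
  rw [hsplit, Iic_union_Icc_eq_Iic hlr, eVariationOn.union f isGreatest_Iic isLeast_Ici,
    ← Iic_union_Icc_eq_Iic hlr, eVariationOn.union f isGreatest_Iic (isLeast_Icc hlr), hjumpl,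
    hjumpr, hconst hin, add_zero, two_mul]

end Traces

end Variation

section Boundary

variable {τ a b : ℝ}

/-- The arc of length `a` on the circle `ℝ / ℤ` that starts at `-τ`, seen in the fundamental
domain `[0, 1]`; `phi τ a b` compares it with the arc `[0, b]`. -/
def shiftedArc (τ a : ℝ) : Set ℝ :=
  Icc 0 1 ∩ (Icc (-τ) (a - τ) ∪ Icc (1 - τ) (a + 1 - τ))

theorem measurableSet_shiftedArc (τ a : ℝ) : MeasurableSet (shiftedArc τ a) :=
  measurableSet_Icc.inter (measurableSet_Icc.union measurableSet_Icc)

theorem volume_shiftedArc_ne_top (τ a : ℝ) : volume (shiftedArc τ a) ≠ ⊤ :=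
  measure_ne_top_of_subset inter_subset_left measure_Icc_lt_top.ne

theorem volume_real_shiftedArc (hτ : τ ∈ Icc (0 : ℝ) 1) (ha : a ∈ Icc (0 : ℝ) 1) :
    volume.real (shiftedArc τ a) = a := by
  obtain ⟨hτ0, hτ1⟩ := hτ
  obtain ⟨ha0, ha1⟩ := ha
  have hsplit : shiftedArc τ a = Icc 0 (a - τ) ∪ Icc (1 - τ) (min 1 (a + 1 - τ)) := by
    ext x
    simp only [shiftedArc, mem_inter_iff, mem_union, mem_Icc, le_min_iff]
    grind
  have hdisj : AEDisjoint volume (Icc 0 (a - τ)) (Icc (1 - τ) (min 1 (a + 1 - τ))) :=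
    measure_mono_null (t := {1 - τ}) (fun x hx ↦ by simp only [mem_inter_iff, mem_Icc] at hx; grind)
      (measure_singleton _)
  rw [hsplit, measureReal_union₀ measurableSet_Icc.nullMeasurableSet hdisj
    measure_Icc_lt_top.ne measure_Icc_lt_top.ne, Real.volume_real_Icc, Real.volume_real_Icc]
  grind

theorem phi_eq_add_sub_overlap (hτ : τ ∈ Icc (0 : ℝ) 1) (ha : a ∈ Icc (0 : ℝ) 1)
    (hb : b ∈ Icc (0 : ℝ) 1) :
    phi τ a b = a + b - 2 * volume.real (shiftedArc τ a ∩ Icc 0 b) := by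
  have hphi : phi τ a b = volume.real (shiftedArc τ a ∆ Icc 0 b) := by
    rw [phi, inter_symmDiff_distrib_left, inter_eq_right.2 (Icc_subset_Icc_right hb.2)]
    rfl
  have hA := measureReal_sdiff_add_inter (μ := volume) (t := Icc 0 b) measurableSet_Icc
    (volume_shiftedArc_ne_top τ a)
  have hB := measureReal_sdiff_add_inter (μ := volume) (s := Icc 0 b)
    (measurableSet_shiftedArc τ a) measure_Icc_lt_top.ne
  rw [volume_real_shiftedArc hτ ha] at hA
  rw [Real.volume_real_Icc_of_le hb.1, inter_comm] at hB
  rw [hphi, measureReal_symmDiff_eq (measurableSet_shiftedArc τ a) measurableSet_Icc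
    (volume_shiftedArc_ne_top τ a) measure_Icc_lt_top.ne]
  linarith

theorem abs_sub_le_phi (hτ : τ ∈ Icc (0 : ℝ) 1) (ha : a ∈ Icc (0 : ℝ) 1)
    (hb : b ∈ Icc (0 : ℝ) 1) : |a - b| ≤ phi τ a b := by
  have hA : volume.real (shiftedArc τ a ∩ Icc 0 b) ≤ a :=
    (measureReal_mono inter_subset_left (volume_shiftedArc_ne_top τ a)).trans_eq
      (volume_real_shiftedArc hτ ha)
  have hB : volume.real (shiftedArc τ a ∩ Icc 0 b) ≤ b :=
    (measureReal_mono inter_subset_right measure_Icc_lt_top.ne).trans_eq (by simp [hb.1])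
  rw [phi_eq_add_sub_overlap hτ ha hb, abs_le]
  constructor <;> linarith

theorem one_sub_abs_sub_abs_le_phi (hτ : τ ∈ Icc (0 : ℝ) 1) (ha : a ∈ Icc (0 : ℝ) 1)
    (hb : b ∈ Icc (0 : ℝ) 1) : 1 - |a - τ| - |b - (1 - τ)| ≤ phi τ a b := by
  have hcover : shiftedArc τ a ∩ Icc 0 b ⊆ Icc 0 (a - τ) ∪ Icc (1 - τ) b := by
    rintro x ⟨⟨-, hx | hx⟩, hx0, hxb⟩
    · exact Or.inl ⟨hx0, hx.2⟩
    · exact Or.inr ⟨hx.1, hxb⟩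
  have hoverlap : volume.real (shiftedArc τ a ∩ Icc 0 b) ≤ max (a - τ) 0 + max (b - (1 - τ)) 0 :=
    calc
      _ ≤ volume.real (Icc 0 (a - τ) ∪ Icc (1 - τ) b) := measureReal_mono hcover
        (measure_union_ne_top measure_Icc_lt_top.ne measure_Icc_lt_top.ne)
      _ ≤ volume.real (Icc 0 (a - τ)) + volume.real (Icc (1 - τ) b) := measureReal_union_le _ _
      _ = _ := by rw [Real.volume_real_Icc, Real.volume_real_Icc, sub_zero]
  rw [phi_eq_add_sub_overlap hτ ha hb]
  grind

theorem phi_zero_zero (τ : ℝ) : phi τ 0 0 = 0 := by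
  have hfinite : (({-τ} ∪ {1 - τ} : Set ℝ) ∆ {0}).Finite :=
    ((finite_singleton _).union (finite_singleton _)).symmDiff (finite_singleton _)
  rw [phi, zero_sub, zero_add, Icc_self, Icc_self, Icc_self,
    (hfinite.inter_of_right _).measure_zero, ENNReal.toReal_zero]

theorem phi_one_one (hτ : τ ∈ Icc (0 : ℝ) 1) : phi τ 1 1 = 0 := by
  have h1 : (1 : ℝ) ∈ Icc (0 : ℝ) 1 := right_mem_Icc.2 zero_le_one
  have hsub : shiftedArc τ 1 ⊆ Icc 0 1 := inter_subset_left
  rw [phi_eq_add_sub_overlap hτ h1 h1, inter_eq_left.2 hsub, volume_real_shiftedArc hτ h1]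
  norm_num

end Boundary

section Reflection

variable {L σ : ℝ} {v : ℝ → ℝ}

/-- The part of `(0, L)` where `v` is strictly between the pure phases `0` and `1`. -/
def diffuseSet (L : ℝ) (v : ℝ → ℝ) : Set ℝ :=
  {x ∈ Ioo 0 L | 0 < v x ∧ v x < 1}

theorem diffuseSet_subset (L : ℝ) (v : ℝ → ℝ) : diffuseSet L v ⊆ Ioo 0 L :=
  sep_subset _ _

theorem Fvol_eq (L : ℝ) (v : ℝ → ℝ) :
    Fvol L v = 2 * volume.real (diffuseSet L v) + (eVariationOn v (Ioo 0 L)).toReal :=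
  rfl

theorem diffuseSet_one_sub (L : ℝ) (v : ℝ → ℝ) :
    diffuseSet L (fun x ↦ 1 - v x) = diffuseSet L v := by
  ext x
  simp only [diffuseSet, sub_pos, sub_lt_self_iff, and_comm]

theorem eVariationOn_const_sub {α E : Type*} [LinearOrder α] [SeminormedAddCommGroup E] (c : E)
    (f : α → E) (s : Set α) : eVariationOn (fun x ↦ c - f x) s = eVariationOn f s := by
  simp only [eVariationOn, edist_sub_left]

theorem Fvol_one_sub (L : ℝ) (v : ℝ → ℝ) : Fvol L (fun x ↦ 1 - v x) = Fvol L v := by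
  rw [Fvol_eq, Fvol_eq, diffuseSet_one_sub, eVariationOn_const_sub]

theorem aemeasurable_restrict_of_boundedVariationOn {f : ℝ → ℝ} {s : Set ℝ}
    (hf : BoundedVariationOn f s) (hs : MeasurableSet s) : AEMeasurable f (volume.restrict s) := by
  obtain ⟨p, q, hp, hq, rfl⟩ := hf.locallyBoundedVariationOn.exists_monotoneOn_sub_monotoneOn
  exact (aemeasurable_restrict_of_monotoneOn hs hp).sub (aemeasurable_restrict_of_monotoneOn hs hq)

theorem Adm.integrableOn (hv : Adm L σ v) : IntegrableOn v (Ioo 0 L) :=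
  .of_bound measure_Ioo_lt_top
    (aemeasurable_restrict_of_boundedVariationOn hv.2.1 measurableSet_Ioo).aestronglyMeasurable 1
    (ae_restrict_of_forall_mem measurableSet_Ioo fun x hx ↦
      (Real.norm_of_nonneg (hv.1 x hx).1).trans_le (hv.1 x hx).2)

theorem Adm.one_sub (hv : Adm L σ v) (hL : 0 ≤ L) : Adm L (1 - σ) (fun x ↦ 1 - v x) := by
  refine ⟨fun x hx ↦ ⟨sub_nonneg.2 (hv.1 x hx).2, sub_le_self _ (hv.1 x hx).1⟩, ?_, ?_⟩
  · rw [BoundedVariationOn, eVariationOn_const_sub]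
    exact hv.2.1
  · rw [integral_sub (by simp) hv.integrableOn, hv.2.2, setIntegral_const,
      Real.volume_real_Ioo_of_le hL, smul_eq_mul]
    ring

end Reflection

/-- The value `min {2, 4√(σL), 4√((1-σ)L)}` of the minimum. -/
def minEnergy (σ L : ℝ) : ℝ :=
  min (min 2 (4 * √(σ * L))) (4 * √((1 - σ) * L))

theorem minEnergy_le_two (σ L : ℝ) : minEnergy σ L ≤ 2 :=
  min_le_of_left_le (min_le_left _ _)

theorem minEnergy_le_four_mul_sqrt (σ L : ℝ) : minEnergy σ L ≤ 4 * √(σ * L) :=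
  min_le_of_left_le (min_le_right _ _)

theorem minEnergy_le_four_mul_sqrt_one_sub (σ L : ℝ) : minEnergy σ L ≤ 4 * √((1 - σ) * L) :=
  min_le_right _ _

theorem four_mul_sqrt_le_of_le_mul {p q r : ℝ} (hp : 0 ≤ p) (hq : 0 ≤ q) (hr : r ≤ p * q) :
    4 * √r ≤ 2 * p + 2 * q := by
  have : √r ≤ (p + q) / 2 :=
    Real.sqrt_le_iff.2 ⟨by positivity, by linarith [four_mul_le_sq_add p q]⟩
  linarith

section LowerBound

variable {τ σ L a b ω : ℝ} {v : ℝ → ℝ}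

theorem Adm.mem_Icc_of_tendsto (hv : Adm L σ v) {c t : ℝ} [(𝓝[Ioo 0 L] t).NeBot]
    (hc : Tendsto v (𝓝[Ioo 0 L] t) (𝓝 c)) : c ∈ Icc (0 : ℝ) 1 :=
  isClosed_Icc.mem_of_tendsto hc (eventually_mem_nhdsWithin.mono hv.1)

theorem Adm.four_mul_sqrt_le (hv : Adm L σ v) (hω : ω ∈ Ico (0 : ℝ) 1)
    (hvω : ∀ x ∈ Ioo 0 L, v x ≤ ω) :
    4 * √(σ * L) ≤ 2 * volume.real (diffuseSet L v) + 2 * ω := by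
  have hzero : ∀ x ∈ Ioo 0 L \ diffuseSet L v, v x = 0 := fun x ⟨hx, hxD⟩ ↦ by
    by_contra hne
    exact hxD ⟨hx, (hv.1 x hx).1.lt_of_ne' hne, (hvω x hx).trans_lt hω.2⟩
  have hmass : σ * L ≤ volume.real (diffuseSet L v) * ω :=
    calc
      σ * L = ∫ x in diffuseSet L v, v x := by
        rw [← hv.2.2, setIntegral_eq_of_subset_of_forall_sdiff_eq_zero measurableSet_Ioo
          (diffuseSet_subset L v) hzero]
      _ ≤ ω * volume.real (diffuseSet L v) :=
        (Real.le_norm_self _).trans <| norm_setIntegral_le_of_norm_le_const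
          ((measure_mono (diffuseSet_subset L v)).trans_lt measure_Ioo_lt_top)
          fun x hx ↦ (Real.norm_of_nonneg hx.2.1.le).trans_le (hvω x hx.1)
      _ = _ := mul_comm _ _
  exact four_mul_sqrt_le_of_le_mul measureReal_nonneg hω.1 hmass

theorem Adm.four_mul_sqrt_one_sub_le (hv : Adm L σ v) (hL : 0 ≤ L) (hω : ω ∈ Ico (0 : ℝ) 1)
    (hvω : ∀ x ∈ Ioo 0 L, 1 - ω ≤ v x) :
    4 * √((1 - σ) * L) ≤ 2 * volume.real (diffuseSet L v) + 2 * ω :=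
  diffuseSet_one_sub L v ▸ (hv.one_sub hL).four_mul_sqrt_le hω fun x hx ↦ sub_le_comm.1 (hvω x hx)

theorem Adm.exists_mean_mem_segment (hv : Adm L σ v) (hL : 0 < L) :
    ∃ x ∈ Ioo 0 L, ∃ y ∈ Ioo 0 L, σ ∈ segment ℝ (v x) (v y) := by
  have hvol : volume (Ioo 0 L) ≠ 0 := by simp [hL]
  have hmean : ⨍ x in Ioo 0 L, v x = σ := by
    rw [setAverage_eq, hv.2.2, Real.volume_real_Ioo_of_le hL.le, smul_eq_mul, sub_zero]
    field_simp
  obtain ⟨x, hx, hxσ⟩ := exists_le_setAverage hvol measure_Ioo_lt_top.ne hv.integrableOn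
  obtain ⟨y, hy, hyσ⟩ := exists_setAverage_le hvol measure_Ioo_lt_top.ne hv.integrableOn
  rw [hmean] at hxσ hyσ
  exact ⟨x, hx, y, hy, Icc_subset_segment ⟨hxσ, hyσ⟩⟩

theorem Adm.two_mul_abs_sub_le_variation_add_phi (hv : Adm L σ v) (hτ : τ ∈ Icc (0 : ℝ) 1)
    (ha : Tendsto v (𝓝[Ioo 0 L] 0) (𝓝 a)) (hb : Tendsto v (𝓝[Ioo 0 L] L) (𝓝 b)) {x y : ℝ}
    (hx : x ∈ Ioo 0 L) (hy : y ∈ Ioo 0 L) :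
    2 * |v x - v y| ≤ (eVariationOn v (Ioo 0 L)).toReal + phi τ a b := by
  have hL : 0 < L := hx.1.trans hx.2
  have := left_nhdsWithin_Ioo_neBot hL
  have := right_nhdsWithin_Ioo_neBot hL
  calc
    2 * |v x - v y| ≤ (eVariationOn v (Ioo 0 L)).toReal + |a - b| :=
      two_mul_dist_le_variation_Ioo_add_dist hv.2.1 ha hb hx hy
    _ ≤ (eVariationOn v (Ioo 0 L)).toReal + phi τ a b := by
      gcongr
      exact abs_sub_le_phi hτ (hv.mem_Icc_of_tendsto ha) (hv.mem_Icc_of_tendsto hb)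

theorem Adm.one_sub_abs_sub_abs_le_variation_add_phi (hv : Adm L σ v) (hτ : τ ∈ Icc (0 : ℝ) 1)
    (hL : 0 < L) (ha : Tendsto v (𝓝[Ioo 0 L] 0) (𝓝 a)) (hb : Tendsto v (𝓝[Ioo 0 L] L) (𝓝 b)) :
    1 - |σ - τ| - |σ - (1 - τ)| ≤ (eVariationOn v (Ioo 0 L)).toReal + phi τ a b := by
  have := left_nhdsWithin_Ioo_neBot hL
  have := right_nhdsWithin_Ioo_neBot hL
  obtain ⟨x, hx, y, hy, hσ⟩ := hv.exists_mean_mem_segment hL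
  have hvar : |σ - a| + |σ - b| ≤ (eVariationOn v (Ioo 0 L)).toReal := by
    rw [abs_sub_comm σ a]
    exact dist_add_dist_le_variation_Ioo_of_mem_segment hv.2.1 ha hb hx hy hσ
  have hphi := one_sub_abs_sub_abs_le_phi hτ (hv.mem_Icc_of_tendsto ha) (hv.mem_Icc_of_tendsto hb)
  linarith [abs_sub_le a σ τ, abs_sub_le b σ (1 - τ), abs_sub_comm σ a, abs_sub_comm σ b]

theorem minEnergy_le_two_mul_add (hσ : σ ∈ Icc (0 : ℝ) 1) (hL : max τ (1 - τ) ≤ L) :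
    minEnergy σ L ≤ 2 * L + (1 - |σ - τ| - |σ - (1 - τ)|) := by
  obtain ⟨hτL, hτL'⟩ := max_le_iff.1 hL
  have hL0 : 0 ≤ L := by linarith
  have hlow : minEnergy σ L ≤ 2 * σ + 2 * L := (minEnergy_le_four_mul_sqrt σ L).trans
    (four_mul_sqrt_le_of_le_mul hσ.1 hL0 le_rfl)
  have hhigh : minEnergy σ L ≤ 2 * (1 - σ) + 2 * L := (minEnergy_le_four_mul_sqrt_one_sub σ L).trans
    (four_mul_sqrt_le_of_le_mul (sub_nonneg.2 hσ.2) hL0 le_rfl)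
  grind [minEnergy_le_two σ L]

theorem minEnergy_le_Fvol_add_phi (hτ : τ ∈ Icc (0 : ℝ) 1) (hσ : σ ∈ Icc (0 : ℝ) 1)
    (hL : max τ (1 - τ) ≤ L) (hv : Adm L σ v)
    (ha : Tendsto v (𝓝[Ioo 0 L] 0) (𝓝 a)) (hb : Tendsto v (𝓝[Ioo 0 L] L) (𝓝 b)) :
    minEnergy σ L ≤ Fvol L v + phi τ a b := by
  have hL0 : 0 < L := by grind
  rw [Fvol_eq, add_assoc]
  obtain ⟨ω, hω⟩ : ∃ ω, (eVariationOn v (Ioo 0 L)).toReal + phi τ a b = 2 * ω :=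
    ⟨_, (mul_div_cancel₀ _ two_ne_zero).symm⟩
  have hosc : ∀ x ∈ Ioo 0 L, ∀ y ∈ Ioo 0 L, |v x - v y| ≤ ω := fun x hx y hy ↦ by
    linarith [hv.two_mul_abs_sub_le_variation_add_phi hτ ha hb hx hy]
  have hmid : L / 2 ∈ Ioo 0 L := ⟨by linarith, by linarith⟩
  have hω0 : 0 ≤ ω := (abs_nonneg _).trans (hosc _ hmid _ hmid)
  have hdiffuse0 : 0 ≤ volume.real (diffuseSet L v) := measureReal_nonneg
  rcases le_or_gt 1 ω with hω1 | hω1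
  · linarith [minEnergy_le_two σ L]
  by_cases h0 : ∃ y ∈ Ioo 0 L, v y = 0
  · obtain ⟨y, hy, hvy⟩ := h0
    rw [hω]
    exact (minEnergy_le_four_mul_sqrt σ L).trans <| hv.four_mul_sqrt_le ⟨hω0, hω1⟩ fun x hx ↦ by
      linarith [le_of_abs_le (hosc x hx y hy)]
  by_cases h1 : ∃ y ∈ Ioo 0 L, v y = 1
  · obtain ⟨y, hy, hvy⟩ := h1
    rw [hω]
    exact (minEnergy_le_four_mul_sqrt_one_sub σ L).trans <|
      hv.four_mul_sqrt_one_sub_le hL0.le ⟨hω0, hω1⟩ fun x hx ↦ by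
        linarith [le_of_abs_le (hosc y hy x hx)]
  push Not at h0 h1
  have hall : diffuseSet L v = Ioo 0 L := (diffuseSet_subset L v).antisymm fun x hx ↦
    ⟨hx, (hv.1 x hx).1.lt_of_ne' (h0 x hx), (hv.1 x hx).2.lt_of_ne (h1 x hx)⟩
  rw [hall, Real.volume_real_Ioo_of_le hL0.le, sub_zero]
  exact (minEnergy_le_two_mul_add hσ hL).trans <|
    add_le_add_right (hv.one_sub_abs_sub_abs_le_variation_add_phi hτ hL0 ha hb) _

end LowerBound

section Plateau

variable {σ L l h : ℝ}

/-- The competitor of height `h` on the centred subinterval of `(0, L)` of length `l`, and `0`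
elsewhere. -/
def plateau (L l h : ℝ) : ℝ → ℝ :=
  (Icc ((L - l) / 2) ((L + l) / 2)).indicator fun _ ↦ h

theorem eVariationOn_plateau_le (hl : 0 ≤ l) (s : Set ℝ) :
    eVariationOn (plateau L l h) s ≤ 2 * ‖h‖ₑ :=
  (eVariationOn.mono _ (subset_univ s)).trans_eq
    (eVariationOn_indicator_Icc_const (by linarith) h)

theorem toReal_eVariationOn_plateau_le (hl : 0 ≤ l) (hh : 0 ≤ h) (s : Set ℝ) :
    (eVariationOn (plateau L l h) s).toReal ≤ 2 * h := by
  simpa [abs_of_nonneg hh] using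
    ENNReal.toReal_mono (by finiteness) (eVariationOn_plateau_le (L := L) (h := h) hl s)

theorem setIntegral_plateau (hl : 0 ≤ l) (hlL : l < L) :
    ∫ x in Ioo 0 L, plateau L l h x = l * h := by
  have hsub : Icc ((L - l) / 2) ((L + l) / 2) ⊆ Ioo 0 L :=
    Icc_subset_Ioo (by linarith) (by linarith)
  rw [plateau, setIntegral_indicator measurableSet_Icc, inter_eq_right.2 hsub, setIntegral_const,
    Real.volume_real_Icc_of_le (by linarith), smul_eq_mul]
  ring

theorem adm_plateau (hl : 0 ≤ l) (hlL : l < L) (hh : h ∈ Icc (0 : ℝ) 1) (hmass : l * h = σ * L) :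
    Adm L σ (plateau L l h) :=
  ⟨fun _ _ ↦ ⟨indicator_nonneg (fun _ _ ↦ hh.1) _,
      indicator_apply_le' (fun _ ↦ hh.2) fun _ ↦ zero_le_one⟩,
    ne_top_of_le_ne_top (by finiteness) (eVariationOn_plateau_le hl _),
    (setIntegral_plateau hl hlL).trans hmass⟩

theorem tendsto_plateau_left (hlL : l < L) :
    Tendsto (plateau L l h) (𝓝[Ioo 0 L] 0) (𝓝 0) := by
  refine tendsto_const_nhds.congr' (mem_nhdsWithin_of_mem_nhds ?_)
  filter_upwards [Iio_mem_nhds (show 0 < (L - l) / 2 by linarith)] with x hx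
  exact (indicator_of_notMem (fun hx' ↦ hx'.1.not_gt hx) _).symm

theorem tendsto_plateau_right (hlL : l < L) :
    Tendsto (plateau L l h) (𝓝[Ioo 0 L] L) (𝓝 0) := by
  refine tendsto_const_nhds.congr' (mem_nhdsWithin_of_mem_nhds ?_)
  filter_upwards [Ioi_mem_nhds (show (L + l) / 2 < L by linarith)] with x hx
  exact (indicator_of_notMem (fun hx' ↦ hx'.2.not_gt hx) _).symm

theorem Fvol_plateau_le (hl : 0 ≤ l) (hh : 0 ≤ h) :
    Fvol L (plateau L l h) ≤ 2 * l + 2 * h := by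
  have hsub : diffuseSet L (plateau L l h) ⊆ Icc ((L - l) / 2) ((L + l) / 2) := fun x hx ↦
    mem_of_indicator_ne_zero hx.2.1.ne'
  have hdiffuse : volume.real (diffuseSet L (plateau L l h)) ≤ l :=
    (measureReal_mono hsub measure_Icc_lt_top.ne).trans_eq (by
      rw [Real.volume_real_Icc_of_le (by linarith)]
      ring)
  rw [Fvol_eq]
  linarith [toReal_eVariationOn_plateau_le (L := L) hl hh (Ioo 0 L)]

theorem Fvol_plateau_one_le (hl : 0 ≤ l) : Fvol L (plateau L l 1) ≤ 2 := by
  have hsharp : diffuseSet L (plateau L l 1) = ∅ := by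
    refine eq_empty_of_forall_notMem fun x hx ↦ hx.2.2.ne ?_
    exact indicator_of_mem (mem_of_indicator_ne_zero hx.2.1.ne') _
  rw [Fvol_eq, hsharp, measureReal_empty]
  linarith [toReal_eVariationOn_plateau_le (L := L) hl zero_le_one (Ioo 0 L)]

end Plateau

section UpperBound

variable {τ σ L : ℝ}

/-- The values of `E^#_τ` on `Adm L σ`; the traces `a`, `b` enter as variables determined by `v`. -/
def energyValues (τ σ L : ℝ) : Set ℝ :=
  {e | ∃ v : ℝ → ℝ, ∃ a b : ℝ, Adm L σ v ∧ Tendsto v (𝓝[Ioo 0 L] 0) (𝓝 a) ∧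
    Tendsto v (𝓝[Ioo 0 L] L) (𝓝 b) ∧ Fvol L v + phi τ a b = e}

theorem exists_mem_energyValues_le_two (τ : ℝ) (hσ : σ ∈ Ico (0 : ℝ) 1) (hL : 0 < L) :
    ∃ e ∈ energyValues τ σ L, e ≤ 2 := by
  have hl : 0 ≤ σ * L := mul_nonneg hσ.1 hL.le
  have hlL : σ * L < L := mul_lt_of_lt_one_left hL hσ.2
  refine ⟨_, ⟨plateau L (σ * L) 1, 0, 0, adm_plateau hl hlL (right_mem_Icc.2 zero_le_one)
    (mul_one _), tendsto_plateau_left hlL, tendsto_plateau_right hlL, rfl⟩, ?_⟩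
  rw [phi_zero_zero, add_zero]
  exact Fvol_plateau_one_le hl

theorem adm_plateau_sqrt (hσL : 0 ≤ σ * L) (hL : √(σ * L) < L) (h1 : √(σ * L) ≤ 1) :
    Adm L σ (plateau L √(σ * L) √(σ * L)) :=
  adm_plateau (Real.sqrt_nonneg _) hL ⟨Real.sqrt_nonneg _, h1⟩ (Real.mul_self_sqrt hσL)

theorem Fvol_plateau_sqrt_le (σ L : ℝ) :
    Fvol L (plateau L √(σ * L) √(σ * L)) ≤ 4 * √(σ * L) :=
  (Fvol_plateau_le (Real.sqrt_nonneg _) (Real.sqrt_nonneg _)).trans_eq (by ring)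

theorem exists_mem_energyValues_le_four_mul_sqrt (τ : ℝ) (hσL : 0 ≤ σ * L)
    (hL : √(σ * L) < L) (h1 : √(σ * L) ≤ 1) :
    ∃ e ∈ energyValues τ σ L, e ≤ 4 * √(σ * L) := by
  refine ⟨_, ⟨_, 0, 0, adm_plateau_sqrt hσL hL h1, tendsto_plateau_left hL,
    tendsto_plateau_right hL, rfl⟩, ?_⟩
  rw [phi_zero_zero, add_zero]
  exact Fvol_plateau_sqrt_le σ L

theorem exists_mem_energyValues_le_four_mul_sqrt_one_sub (hτ : τ ∈ Icc (0 : ℝ) 1)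
    (hσL : 0 ≤ (1 - σ) * L) (hL : √((1 - σ) * L) < L) (h1 : √((1 - σ) * L) ≤ 1) :
    ∃ e ∈ energyValues τ σ L, e ≤ 4 * √((1 - σ) * L) := by
  have hadm := (adm_plateau_sqrt hσL hL h1).one_sub ((Real.sqrt_nonneg _).trans hL.le)
  rw [sub_sub_cancel] at hadm
  refine ⟨_, ⟨_, 1 - 0, 1 - 0, hadm, (tendsto_plateau_left hL).const_sub 1,
    (tendsto_plateau_right hL).const_sub 1, rfl⟩, ?_⟩
  rw [sub_zero, phi_one_one hτ, add_zero, Fvol_one_sub]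
  exact Fvol_plateau_sqrt_le (1 - σ) L

theorem exists_mem_energyValues_le_minEnergy (hτ : τ ∈ Icc (0 : ℝ) 1) (hσ : σ ∈ Ico (0 : ℝ) 1)
    (hL : 1 / 2 ≤ L) : ∃ e ∈ energyValues τ σ L, e ≤ minEnergy σ L := by
  have hL0 : 0 < L := by linarith
  rw [minEnergy, min_assoc]
  rcases le_or_gt 2 (min (4 * √(σ * L)) (4 * √((1 - σ) * L))) with hmin | hmin
  · rw [min_eq_left hmin]
    exact exists_mem_energyValues_le_two τ hσ hL0
  · rw [min_eq_right hmin.le]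
    rcases min_choice (4 * √(σ * L)) (4 * √((1 - σ) * L)) with hm | hm <;> rw [hm] at hmin ⊢
    · exact exists_mem_energyValues_le_four_mul_sqrt τ (mul_nonneg hσ.1 hL0.le)
        (by linarith) (by linarith)
    · exact exists_mem_energyValues_le_four_mul_sqrt_one_sub hτ
        (mul_nonneg (sub_nonneg.2 hσ.2.le) hL0.le) (by linarith) (by linarith)

end UpperBound

/-- Periodic minimum problem in large domains: for `L ≥ max{τ,1−τ}` the least value of
`E^#_τ(v) = Fvol L v + φ_τ(v(0⁺), v(L⁻))` over `Adm(L,σ)` is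
`min{2, 4√(σL), 4√((1−σ)L)}` (in particular, a τ-free quantity). -/
theorem periodic_min_large_domain (τ σ L : ℝ)
    (hτ : τ ∈ Set.Icc (0 : ℝ) 1) (hσ : σ ∈ Set.Ioo (0 : ℝ) 1)
    (hL : max τ (1 - τ) ≤ L) :
    (∀ v : ℝ → ℝ, ∀ a b : ℝ, Adm L σ v →
        Tendsto v (nhdsWithin 0 (Set.Ioo 0 L)) (nhds a) →
        Tendsto v (nhdsWithin L (Set.Ioo 0 L)) (nhds b) →
        min (min 2 (4 * Real.sqrt (σ * L))) (4 * Real.sqrt ((1 - σ) * L)) ≤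
          Fvol L v + phi τ a b) ∧
    (∃ v : ℝ → ℝ, ∃ a b : ℝ, Adm L σ v ∧
        Tendsto v (nhdsWithin 0 (Set.Ioo 0 L)) (nhds a) ∧
        Tendsto v (nhdsWithin L (Set.Ioo 0 L)) (nhds b) ∧
        Fvol L v + phi τ a b =
          min (min 2 (4 * Real.sqrt (σ * L))) (4 * Real.sqrt ((1 - σ) * L))) := by
  have hlower {v : ℝ → ℝ} {a b : ℝ} (hv : Adm L σ v) (ha : Tendsto v (𝓝[Ioo 0 L] 0) (𝓝 a))
      (hb : Tendsto v (𝓝[Ioo 0 L] L) (𝓝 b)) : minEnergy σ L ≤ Fvol L v + phi τ a b :=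
    minEnergy_le_Fvol_add_phi hτ (Ioo_subset_Icc_self hσ) hL hv ha hb
  have hL' : 1 / 2 ≤ L := by linarith [le_max_left τ (1 - τ), le_max_right τ (1 - τ)]
  obtain ⟨_, ⟨v, a, b, hv, ha, hb, rfl⟩, hupper⟩ :=
    exists_mem_energyValues_le_minEnergy hτ (Ioo_subset_Ico_self hσ) hL'
  exact ⟨fun _ _ _ ↦ hlower, v, a, b, hv, ha, hb, hupper.antisymm (hlower hv ha hb)⟩
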